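/- Size predicate bounds real size by ideal size: for any term M of the cast calculus (over an arbitrary family of cast representations), any natural number n, and any Boolean b, if the size predicate ⊢ M ok n b holds, then size(M) ≤ 10·ideal-size(M) + 3. -/

import Mathlib

/-!
Casts come in bounded stacks: `SizeOK M n b` forces `n ≤ 3`, and `n` bounds the number of cast
applications at the top of `M`. Charging these casts to `n` rather than to the ideal size gives
the stronger invariant `tmSize M ≤ 10 * tmIdealSize M + n` (`SizeOK.size_bound`), which a cast
preserves by raising both sides by one. A non-cast node has at most three subterms, each with an
excess of at most `3`, so together with the node itself it costs at most `1 + 3 * 3 = 10`, which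
is exactly what its single unit of ideal size pays for.
-/

set_option maxHeartbeats 1000000

abbrev Label : Type := ℕ

inductive BaseTy : Type
  | nat | bool | int | unit | bot
deriving DecidableEq

inductive GType : Type
  | base (b : BaseTy)
  | unk
  | arr (A B : GType)
  | prod (A B : GType)
  | sum (A B : GType)
deriving DecidableEq

inductive Atomic : GType → Prop
  | base (b : BaseTy) : Atomic (.base b)
  | unk : Atomic .unk

inductive TyPrec : GType → GType → Prop
  | unk (A : GType) : TyPrec .unk A
  | base (b : BaseTy) : TyPrec (.base b) (.base b)
  | arr : TyPrec A A' → TyPrec B B' → TyPrec (.arr A B) (.arr A' B')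
  | prod : TyPrec A A' → TyPrec B B' → TyPrec (.prod A B) (.prod A' B')
  | sum : TyPrec A A' → TyPrec B B' → TyPrec (.sum A B) (.sum A' B')

inductive CtxPrec : List GType → List GType → Prop
  | nil : CtxPrec [] []
  | cons : TyPrec A A' → CtxPrec Γ Γ' → CtxPrec (A :: Γ) (A' :: Γ')

inductive Consis : GType → GType → Type
  | unkR (A : GType) : Consis A .unk
  | unkL (B : GType) : Consis .unk B
  | base (b : BaseTy) : Consis (.base b) (.base b)
  | arr : Consis A' A → Consis B B' → Consis (.arr A B) (.arr A' B')
  | prod : Consis A A' → Consis B B' → Consis (.prod A B) (.prod A' B')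
  | sum : Consis A A' → Consis B B' → Consis (.sum A B) (.sum A' B')

def Consis.join : ∀ {A B : GType}, Consis A B → GType
  | _, _, .unkR A => A
  | _, _, .unkL B => B
  | _, _, .base b => .base b
  | _, _, .arr c d => .arr c.join d.join
  | _, _, .prod c d => .prod c.join d.join
  | _, _, .sum c d => .sum c.join d.join

def Consis.refl : (A : GType) → Consis A A
  | .unk => .unkR .unk
  | .base b => .base b
  | .arr A B => .arr (Consis.refl A) (Consis.refl B)
  | .prod A B => .prod (Consis.refl A) (Consis.refl B)
  | .sum A B => .sum (Consis.refl A) (Consis.refl B)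

def Consis.symm : ∀ {A B : GType}, Consis A B → Consis B A
  | _, _, .unkR A => .unkL A
  | _, _, .unkL B => .unkR B
  | _, _, .base b => .base b
  | _, _, .arr c d => .arr c.symm d.symm
  | _, _, .prod c d => .prod c.symm d.symm
  | _, _, .sum c d => .sum c.symm d.symm

mutual
def Consis.joinL : ∀ {A B : GType}, (c : Consis A B) → Consis A c.join
  | _, _, .unkR A => Consis.refl A
  | _, _, .unkL B => .unkL B
  | _, _, .base b => .base b
  | _, _, .arr c d => .arr (Consis.joinR c).symm (Consis.joinL d)
  | _, _, .prod c d => .prod (Consis.joinL c) (Consis.joinL d)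
  | _, _, .sum c d => .sum (Consis.joinL c) (Consis.joinL d)

def Consis.joinR : ∀ {A B : GType}, (c : Consis A B) → Consis B c.join
  | _, _, .unkR A => .unkL A
  | _, _, .unkL B => Consis.refl B
  | _, _, .base b => .base b
  | _, _, .arr c d => .arr (Consis.joinL c).symm (Consis.joinR d)
  | _, _, .prod c d => .prod (Consis.joinR c) (Consis.joinR d)
  | _, _, .sum c d => .sum (Consis.joinR c) (Consis.joinR d)
end

inductive GVar : List GType → GType → Type
  | z : GVar (A :: Γ) A
  | s : GVar Γ A → GVar (B :: Γ) A

def GVar.idx : ∀ {Γ A}, GVar Γ A → ℕ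
  | _, _, .z => 0
  | _, _, .s x => x.idx + 1

inductive Prim : GType → Type
  | base (b : BaseTy) : Prim (.base b)
  | fn (b : BaseTy) {A : GType} : Prim A → Prim (.arr (.base b) A)

def BaseTy.rep : BaseTy → Type
  | .nat => ℕ
  | .bool => Bool
  | .int => ℤ
  | .unit => Unit
  | .bot => Empty

def Prim.rep : ∀ {A : GType}, Prim A → Type
  | _, .base b => b.rep
  | _, .fn b p => b.rep → p.rep

/-- Renamings. -/
def Ren (Γ Δ : List GType) : Type := ∀ A : GType, GVar Γ A → GVar Δ A

def Ren.ext {Γ Δ : List GType} (ρ : Ren Γ Δ) (B : GType) : Ren (B :: Γ) (B :: Δ) :=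
  fun _ x =>
    match x with
    | .z => .z
    | .s y => .s (ρ _ y)

def shiftRen {Γ : List GType} (B : GType) : Ren Γ (B :: Γ) := fun _ x => .s x

/-- Intrinsically-typed terms of the Parameterized Cast Calculus `CC(⇒)`,
over an arbitrary family `Cast` of cast representations. -/
inductive Tm (Cast : GType → GType → Type) : List GType → GType → Type
  | const {Γ : List GType} {A : GType} (p : Prim A) (k : p.rep) : Tm Cast Γ A
  | var {Γ A} (x : GVar Γ A) : Tm Cast Γ A
  | lam {Γ A B} (N : Tm Cast (A :: Γ) B) : Tm Cast Γ (.arr A B)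
  | app {Γ A B} (L : Tm Cast Γ (.arr A B)) (M : Tm Cast Γ A) : Tm Cast Γ B
  | ite {Γ A} (L : Tm Cast Γ (.base .bool)) (M N : Tm Cast Γ A) : Tm Cast Γ A
  | cons {Γ A B} (M : Tm Cast Γ A) (N : Tm Cast Γ B) : Tm Cast Γ (.prod A B)
  | fst {Γ A B} (M : Tm Cast Γ (.prod A B)) : Tm Cast Γ A
  | snd {Γ A B} (M : Tm Cast Γ (.prod A B)) : Tm Cast Γ B
  | inl {Γ A} (B : GType) (M : Tm Cast Γ A) : Tm Cast Γ (.sum A B)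
  | inr {Γ B} (A : GType) (M : Tm Cast Γ B) : Tm Cast Γ (.sum A B)
  | case {Γ A B C} (L : Tm Cast Γ (.sum A B))
      (M : Tm Cast Γ (.arr A C)) (N : Tm Cast Γ (.arr B C)) : Tm Cast Γ C
  | cast {Γ A B} (M : Tm Cast Γ A) (c : Cast A B) : Tm Cast Γ B
  | blame {Γ} (A : GType) (ℓ : Label) : Tm Cast Γ A

def Tm.rename {Cast} : ∀ {Γ Δ : List GType} {A : GType}, Ren Γ Δ → Tm Cast Γ A → Tm Cast Δ A
  | _, _, _, _, .const p k => .const p k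
  | _, _, _, ρ, .var x => .var (ρ _ x)
  | _, _, _, ρ, .lam N => .lam (N.rename (ρ.ext _))
  | _, _, _, ρ, .app L M => .app (L.rename ρ) (M.rename ρ)
  | _, _, _, ρ, .ite L M N => .ite (L.rename ρ) (M.rename ρ) (N.rename ρ)
  | _, _, _, ρ, .cons M N => .cons (M.rename ρ) (N.rename ρ)
  | _, _, _, ρ, .fst M => .fst (M.rename ρ)
  | _, _, _, ρ, .snd M => .snd (M.rename ρ)
  | _, _, _, ρ, .inl B M => .inl B (M.rename ρ)
  | _, _, _, ρ, .inr A M => .inr A (M.rename ρ)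
  | _, _, _, ρ, .case L M N => .case (L.rename ρ) (M.rename ρ) (N.rename ρ)
  | _, _, _, ρ, .cast M c => .cast (M.rename ρ) c
  | _, _, _, _, .blame A ℓ => .blame A ℓ

/-- Substitutions. -/
def Subst (Cast : GType → GType → Type) (Γ Δ : List GType) : Type :=
  ∀ A : GType, GVar Γ A → Tm Cast Δ A

def Subst.exts {Cast} {Γ Δ : List GType} (σ : Subst Cast Γ Δ) (B : GType) :
    Subst Cast (B :: Γ) (B :: Δ) :=
  fun _ x =>
    match x with
    | .z => .var .z
    | .s y => (σ _ y).rename (shiftRen B)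

def Tm.subst {Cast} : ∀ {Γ Δ : List GType} {A : GType}, Subst Cast Γ Δ → Tm Cast Γ A → Tm Cast Δ A
  | _, _, _, _, .const p k => .const p k
  | _, _, _, σ, .var x => σ _ x
  | _, _, _, σ, .lam N => .lam (N.subst (σ.exts _))
  | _, _, _, σ, .app L M => .app (L.subst σ) (M.subst σ)
  | _, _, _, σ, .ite L M N => .ite (L.subst σ) (M.subst σ) (N.subst σ)
  | _, _, _, σ, .cons M N => .cons (M.subst σ) (N.subst σ)
  | _, _, _, σ, .fst M => .fst (M.subst σ)
  | _, _, _, σ, .snd M => .snd (M.subst σ)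
  | _, _, _, σ, .inl B M => .inl B (M.subst σ)
  | _, _, _, σ, .inr A M => .inr A (M.subst σ)
  | _, _, _, σ, .case L M N => .case (L.subst σ) (M.subst σ) (N.subst σ)
  | _, _, _, σ, .cast M c => .cast (M.subst σ) c
  | _, _, _, _, .blame A ℓ => .blame A ℓ

def substZero {Cast} {Γ : List GType} {B : GType} (N : Tm Cast Γ B) : Subst Cast (B :: Γ) Γ :=
  fun _ x =>
    match x with
    | .z => N
    | .s y => .var y

/-- `M [ N ]`. -/
def Tm.subst1 {Cast} {Γ : List GType} {A B : GType}
    (M : Tm Cast (B :: Γ) A) (N : Tm Cast Γ B) : Tm Cast Γ A :=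
  M.subst (substZero N)

/-- The Size Predicate `⊢ M ok n b`: `n` counts the cast applications at the top
of `M`; `b` records whether `M` occurs in a delayed context (under a λ or in a
branch of a conditional or case). -/
inductive SizeOK {Cast : GType → GType → Type} :
    ∀ {Γ : List GType} {A : GType}, Tm Cast Γ A → ℕ → Bool → Prop
  | cast1 {Γ A B} {M : Tm Cast Γ A} {c : Cast A B} {n : ℕ} :
      SizeOK M n false → n ≤ 2 → SizeOK (.cast M c) (n + 1) false
  | cast2 {Γ A B} {M : Tm Cast Γ A} {c : Cast A B} {n : ℕ} :
      SizeOK M n true → n ≤ 1 → SizeOK (.cast M c) (n + 1) true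
  | var {Γ A} {x : GVar Γ A} (b : Bool) : SizeOK (Cast := Cast) (.var x) 1 b
  | lam {Γ A B} {N : Tm Cast (A :: Γ) B} {m : ℕ} (b : Bool) :
      SizeOK N m true → SizeOK (.lam N) 0 b
  | app {Γ A B} {L : Tm Cast Γ (.arr A B)} {M : Tm Cast Γ A} {n m : ℕ} {b : Bool} :
      SizeOK L n b → SizeOK M m b → SizeOK (.app L M) 0 b
  | const {Γ A} {p : Prim A} {k : p.rep} (b : Bool) :
      SizeOK (Cast := Cast) (.const (Γ := Γ) p k) 0 b
  | ite {Γ A} {L : Tm Cast Γ (.base .bool)} {M N : Tm Cast Γ A} {n m k : ℕ} {b : Bool} :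
      SizeOK L n b → SizeOK M m true → SizeOK N k true → SizeOK (.ite L M N) 0 b
  | cons {Γ A B} {M : Tm Cast Γ A} {N : Tm Cast Γ B} {n m : ℕ} {b : Bool} :
      SizeOK M n b → SizeOK N m b → SizeOK (.cons M N) 0 b
  | fst {Γ A B} {M : Tm Cast Γ (.prod A B)} {n : ℕ} {b : Bool} :
      SizeOK M n b → SizeOK (.fst M) 0 b
  | snd {Γ A B} {M : Tm Cast Γ (.prod A B)} {n : ℕ} {b : Bool} :
      SizeOK M n b → SizeOK (.snd M) 0 b
  | inl {Γ A B} {M : Tm Cast Γ A} {n : ℕ} {b : Bool} :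
      SizeOK M n b → SizeOK (.inl (Γ := Γ) B M) 0 b
  | inr {Γ A B} {M : Tm Cast Γ B} {n : ℕ} {b : Bool} :
      SizeOK M n b → SizeOK (.inr (Γ := Γ) A M) 0 b
  | case {Γ A B C} {L : Tm Cast Γ (.sum A B)} {M : Tm Cast Γ (.arr A C)}
      {N : Tm Cast Γ (.arr B C)} {n m k : ℕ} {b : Bool} :
      SizeOK L n b → SizeOK M m true → SizeOK N k true → SizeOK (.case L M N) 0 b
  | blame {Γ A ℓ} (b : Bool) : SizeOK (Cast := Cast) (.blame (Γ := Γ) A ℓ) 0 b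

/-- The size of a term, counting each cast application as one node. -/
def tmSize {Cast : GType → GType → Type} : ∀ {Γ : List GType} {A : GType}, Tm Cast Γ A → ℕ
  | _, _, .const _ _ => 1
  | _, _, .var _ => 1
  | _, _, .lam N => 1 + tmSize N
  | _, _, .app L M => 1 + tmSize L + tmSize M
  | _, _, .ite L M N => 1 + tmSize L + tmSize M + tmSize N
  | _, _, .cons M N => 1 + tmSize M + tmSize N
  | _, _, .fst M => 1 + tmSize M
  | _, _, .snd M => 1 + tmSize M
  | _, _, .inl _ M => 1 + tmSize M
  | _, _, .inr _ M => 1 + tmSize M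
  | _, _, .case L M N => 1 + tmSize L + tmSize M + tmSize N
  | _, _, .cast M _ => 1 + tmSize M
  | _, _, .blame _ _ => 1

/-- The ideal size of a term: the same node count, but casts are free. -/
def tmIdealSize {Cast : GType → GType → Type} : ∀ {Γ : List GType} {A : GType}, Tm Cast Γ A → ℕ
  | _, _, .const _ _ => 1
  | _, _, .var _ => 1
  | _, _, .lam N => 1 + tmIdealSize N
  | _, _, .app L M => 1 + tmIdealSize L + tmIdealSize M
  | _, _, .ite L M N => 1 + tmIdealSize L + tmIdealSize M + tmIdealSize N
  | _, _, .cons M N => 1 + tmIdealSize M + tmIdealSize N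
  | _, _, .fst M => 1 + tmIdealSize M
  | _, _, .snd M => 1 + tmIdealSize M
  | _, _, .inl _ M => 1 + tmIdealSize M
  | _, _, .inr _ M => 1 + tmIdealSize M
  | _, _, .case L M N => 1 + tmIdealSize L + tmIdealSize M + tmIdealSize N
  | _, _, .cast M _ => tmIdealSize M
  | _, _, .blame _ _ => 1

/-- The invariant behind the size bound: the additive excess is the index `n` of the predicate
itself, and `n` never exceeds `3`. -/
theorem SizeOK.size_bound {Cast : GType → GType → Type} {Γ : List GType} {A : GType}
    {M : Tm Cast Γ A} {n : ℕ} {b : Bool} (h : SizeOK M n b) :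
    n ≤ 3 ∧ tmSize M ≤ 10 * tmIdealSize M + n := by
  induction h <;> simp only [tmSize, tmIdealSize] <;> omega

/-- Lemma 6.5 (Size Predicate and Ideal Size): under the Size Predicate, the
size of a term is bounded by 10 times its ideal size, plus 3. -/
theorem size_le_ideal_size {Cast : GType → GType → Type}
    {Γ : List GType} {A : GType} (M : Tm Cast Γ A) (n : ℕ) (b : Bool)
    (h : SizeOK M n b) : tmSize M ≤ 10 * tmIdealSize M + 3 := by
  obtain ⟨hn, hM⟩ := h.size_bound
  omega
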